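/- Let d ≥ 1 and N ≥ N_min := d(d+1)/2. Let A ∈ ℝ^{N×N_min} have rank N_min. Define C(A) = (N / (N_min·d·(d+2))) · Tr((AᵀA)⁻¹(1_d·1_dᵀ + 2I)), where each row of A is h(q_i) for a unit vector q_i ∈ ℝ^d (so that Tr(AᵀA) = N and 1_dᵀ·AᵀA·1_d-related identities hold, in particular Aᵀ·A satisfies Tr(1_d 1_dᵀ Aᵀ A) = N). Then C(A) ≥ 1, with equality if and only if AᵀA = (N/(d(d+2)))·(1_d·1_dᵀ + 2I). -/

import Mathlib

open Matrix

abbrev Idx (d : ℕ) : Type := Fin d ⊕ {p : Fin d × Fin d // p.1 < p.2}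

/-- The half-vectorized outer-product map
`h(q) = (q_1², …, q_d², √2 q_1 q_2, …, √2 q_{d-1} q_d)`. -/
noncomputable def hvec {d : ℕ} (q : Fin d → ℝ) : Idx d → ℝ :=
  Sum.elim (fun i => q i ^ 2) (fun p => Real.sqrt 2 * (q p.1.1 * q p.1.2))

/-- The vector `1_d ∈ ℝ^{d(d+1)/2}`: first `d` entries `1`, the rest `0`. -/
def oneVec (d : ℕ) : Idx d → ℝ := Sum.elim 1 0

/-- The matrix `1_d 1_dᵀ`. -/
noncomputable def Jmat (d : ℕ) : Matrix (Idx d) (Idx d) ℝ :=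
  vecMulVec (oneVec d) (oneVec d)

/-- The C-cost `C(A) = (N / (N_min d (d+2))) Tr((AᵀA)⁻¹ (1_d 1_dᵀ + 2I))`. -/
noncomputable def Ccost {d N : ℕ} (A : Matrix (Fin N) (Idx d) ℝ) : ℝ :=
  ((N : ℝ) / (((d * (d + 1) / 2 : ℕ) : ℝ) * ((d : ℝ) * ((d : ℝ) + 2)))) *
    ((Aᵀ * A)⁻¹ * (Jmat d + (2 : ℝ) • (1 : Matrix (Idx d) (Idx d) ℝ))).trace

namespace Matrix

variable {n : Type*} [Fintype n] [DecidableEq n]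

open scoped MatrixOrder in
lemma PosDef.exists_isUnit_eq_conjTranspose_mul_self {P : Matrix n n ℝ} (hP : P.PosDef) :
    ∃ B : Matrix n n ℝ, IsUnit B ∧ P = Bᴴ * B := by
  obtain ⟨B, hB⟩ := CStarAlgebra.nonneg_iff_eq_star_mul_self.mp hP.posSemidef.nonneg
  rw [star_eq_conjTranspose] at hB
  refine ⟨B, ?_, hB⟩
  have hU := hP.isUnit
  rw [hB, isUnit_iff_isUnit_det, det_mul] at hU
  exact (isUnit_iff_isUnit_det _).2 (isUnit_of_mul_isUnit_right hU)

/-- The quadratic form `D ↦ tr (P D Q Dᴴ)` with `P`, `Q` positive definite is positive definite. -/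
lemma PosDef.trace_mul_mul_mul_conjTranspose {P Q : Matrix n n ℝ} (hP : P.PosDef)
    (hQ : Q.PosDef) (D : Matrix n n ℝ) :
    0 ≤ (P * (D * Q * Dᴴ)).trace ∧ ((P * (D * Q * Dᴴ)).trace = 0 ↔ D = 0) := by
  obtain ⟨B, hB, rfl⟩ := hP.exists_isUnit_eq_conjTranspose_mul_self
  obtain ⟨C, hC, rfl⟩ := hQ.exists_isUnit_eq_conjTranspose_mul_self
  have key : (Bᴴ * B * (D * (Cᴴ * C) * Dᴴ)).trace
      = ((B * D * Cᴴ) * (B * D * Cᴴ)ᴴ).trace := by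
    rw [Matrix.mul_assoc Bᴴ, trace_mul_comm]
    simp only [conjTranspose_mul, conjTranspose_conjTranspose, Matrix.mul_assoc]
  rw [key]
  refine ⟨(posSemidef_self_mul_conjTranspose _).trace_nonneg, ?_⟩
  rw [trace_mul_conjTranspose_self_eq_zero_iff]
  have hC' : IsUnit Cᴴ := hC.star
  rw [hC'.mul_left_eq_zero, hB.mul_right_eq_zero]

/-- If `tr (S⁻¹ M)` equals the dimension, then `tr (M⁻¹ S)` is at least the dimension, with
equality only at `M = S`. -/
lemma PosDef.card_le_trace_inv_mul {M S : Matrix n n ℝ} (hM : M.PosDef) (hS : S.PosDef)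
    (h : (S⁻¹ * M).trace = Fintype.card n) :
    (Fintype.card n : ℝ) ≤ (M⁻¹ * S).trace ∧
      ((M⁻¹ * S).trace = Fintype.card n ↔ M = S) := by
  have hMu := (isUnit_iff_isUnit_det _).1 hM.isUnit
  have hSu := (isUnit_iff_isUnit_det _).1 hS.isUnit
  have hD : (M - S)ᴴ = M - S := (hM.isHermitian.sub hS.isHermitian)
  have key : (S⁻¹ * ((M - S) * M⁻¹ * (M - S)ᴴ)).trace
      = (M⁻¹ * S).trace - Fintype.card n := by
    have : S⁻¹ * ((M - S) * M⁻¹ * (M - S)ᴴ) = S⁻¹ * M - 1 - 1 + M⁻¹ * S := by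
      rw [hD]
      simp only [sub_mul, mul_sub, mul_nonsing_inv _ hMu, Matrix.one_mul, Matrix.mul_assoc,
        nonsing_inv_mul _ hMu, nonsing_inv_mul _ hSu, Matrix.mul_one,
        nonsing_inv_mul_cancel_left _ _ hSu]
      abel
    rw [this]
    simp only [trace_add, trace_sub, trace_one, h]
    ring
  have := hS.inv.trace_mul_mul_mul_conjTranspose hM.inv (M - S)
  rw [key, sub_nonneg, sub_eq_zero, sub_eq_zero] at this
  exact this

lemma posDef_transpose_mul_self_of_rank_eq_card {m : Type*} [Fintype m] {A : Matrix m n ℝ}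
    (hA : A.rank = Fintype.card n) : (Aᵀ * A).PosDef := by
  have hps : (Aᵀ * A).PosSemidef := by
    simpa using posSemidef_conjTranspose_mul_self A
  rw [hps.posDef_iff_isUnit, ← mulVec_surjective_iff_isUnit]
  have hr : Module.finrank ℝ (LinearMap.range (Aᵀ * A).mulVecLin)
      = Module.finrank ℝ (n → ℝ) := by
    rw [Module.finrank_fintype_fun_eq_card, ← hA, ← rank_transpose_mul_self A, Matrix.rank]
  exact LinearMap.range_eq_top.1 (Submodule.eq_top_of_finrank_eq hr)

end Matrix

lemma sum_sq_add_two_mul_sum_lt {d : ℕ} (a : Fin d → ℝ) :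
    ∑ k, a k ^ 2 + 2 * ∑ p : {p : Fin d × Fin d // p.1 < p.2}, a p.1.1 * a p.1.2
      = (∑ k, a k) ^ 2 := by
  have hsub : ∑ p : {p : Fin d × Fin d // p.1 < p.2}, a p.1.1 * a p.1.2
      = ∑ k, ∑ l, if k < l then a k * a l else 0 := by
    rw [← Finset.sum_subtype (Finset.univ.filter fun p : Fin d × Fin d => p.1 < p.2)
      (by simp) fun p => a p.1 * a p.2, Finset.sum_filter, Fintype.sum_prod_type]
  have hswap : ∑ k, ∑ l, (if k < l then a k * a l else 0)
      = ∑ k, ∑ l, if l < k then a k * a l else 0 := by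
    rw [Finset.sum_comm]
    simp only [mul_comm]
  have hdiag : ∑ k, a k ^ 2 = ∑ k, ∑ l, if k = l then a k * a l else 0 := by
    simp [sq]
  rw [two_mul, hsub]
  nth_rewrite 2 [hswap]
  rw [hdiag, sq, Finset.sum_mul_sum, ← Finset.sum_add_distrib, ← Finset.sum_add_distrib]
  refine Finset.sum_congr rfl fun k _ => ?_
  rw [← Finset.sum_add_distrib, ← Finset.sum_add_distrib]
  refine Finset.sum_congr rfl fun l _ => ?_
  rcases lt_trichotomy k l with h | h | h
  · simp [h, h.ne, h.not_gt]
  · simp [h]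
  · simp [h, h.ne', h.not_gt]

lemma two_mul_card_idx (d : ℕ) : 2 * Fintype.card (Idx d) = d * (d + 1) := by
  have h := sum_sq_add_two_mul_sum_lt (fun _ : Fin d => (1 : ℝ))
  simp only [one_pow, mul_one, Finset.sum_const, Finset.card_univ, nsmul_eq_mul,
    Fintype.card_fin] at h
  rw [Fintype.card_sum, Fintype.card_fin]
  have h' : d + 2 * Fintype.card {p : Fin d × Fin d // p.1 < p.2} = d ^ 2 := by exact_mod_cast h
  linarith

lemma hvec_dotProduct_self {d : ℕ} (q : Fin d → ℝ) :
    hvec q ⬝ᵥ hvec q = (∑ k, q k ^ 2) ^ 2 := by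
  rw [← sum_sq_add_two_mul_sum_lt, dotProduct, Fintype.sum_sum_type, Finset.mul_sum]
  congr 1
  · simp [hvec, sq]
  · refine Finset.sum_congr rfl fun p _ => ?_
    have h2 : Real.sqrt 2 * Real.sqrt 2 = 2 := Real.mul_self_sqrt (by norm_num)
    simp only [hvec, Sum.elim_inr]
    linear_combination (q p.1.1 * q p.1.2) ^ 2 * h2

lemma oneVec_dotProduct_hvec {d : ℕ} (q : Fin d → ℝ) :
    oneVec d ⬝ᵥ hvec q = ∑ k, q k ^ 2 := by
  simp [dotProduct, Fintype.sum_sum_type, oneVec, hvec]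

lemma oneVec_dotProduct_self (d : ℕ) : oneVec d ⬝ᵥ oneVec d = d := by
  simp [dotProduct, Fintype.sum_sum_type, oneVec]

lemma Jmat_mul_self (d : ℕ) : Jmat d * Jmat d = (d : ℝ) • Jmat d := by
  rw [Jmat, vecMulVec_mul_vecMulVec, oneVec_dotProduct_self]
  ext i j
  simp [vecMulVec_apply, mul_left_comm]

lemma posDef_Jmat_add_two (d : ℕ) :
    (Jmat d + (2 : ℝ) • (1 : Matrix (Idx d) (Idx d) ℝ)).PosDef := by
  refine PosDef.posSemidef_add ?_ (PosDef.one.smul two_pos)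
  simpa [Jmat] using posSemidef_vecMulVec_self_star (oneVec d)

lemma inv_Jmat_add_two (d : ℕ) :
    (Jmat d + (2 : ℝ) • (1 : Matrix (Idx d) (Idx d) ℝ))⁻¹
      = (2⁻¹ : ℝ) • (1 - ((d : ℝ) + 2)⁻¹ • Jmat d) := by
  refine inv_eq_left_inv ?_
  have hd : (d : ℝ) + 2 ≠ 0 := by positivity
  simp only [smul_mul_assoc, mul_add, sub_mul, Jmat_mul_self, Matrix.one_mul, mul_smul_comm,
    Matrix.mul_one]
  match_scalars <;> field_simp
  ring

/-- The trace identity for a matrix whose rows are the `hvec` of unit vectors. -/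
lemma trace_inv_Jmat_add_two_mul {d N : ℕ} (q : Fin N → Fin d → ℝ)
    (hq : ∀ i, ∑ k, q i k ^ 2 = 1) (A : Matrix (Fin N) (Idx d) ℝ)
    (hA : ∀ i, A i = hvec (q i)) :
    ((Jmat d + (2 : ℝ) • (1 : Matrix (Idx d) (Idx d) ℝ))⁻¹ * (Aᵀ * A)).trace
      = N * ((d : ℝ) + 1) / (2 * ((d : ℝ) + 2)) := by
  have htr : (Aᵀ * A).trace = N := by
    rw [trace_mul_comm]
    have : ∀ i, (A * Aᵀ) i i = 1 := fun i => by
      have h : (A * Aᵀ) i i = A i ⬝ᵥ A i := rfl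
      rw [h, hA, hvec_dotProduct_self, hq, one_pow]
    simp [trace, this]
  have hJ : (Jmat d * (Aᵀ * A)).trace = N := by
    have hv : A *ᵥ oneVec d = 1 := by
      ext i
      rw [mulVec, hA, dotProduct_comm, oneVec_dotProduct_hvec, hq, Pi.one_apply]
    rw [← Matrix.mul_assoc, trace_mul_comm, Jmat, vecMulVec_mul, mul_vecMulVec, hv,
      vecMul_transpose, hv]
    simp [trace]
  have hd : (d : ℝ) + 2 ≠ 0 := by positivity
  rw [inv_Jmat_add_two, smul_mul_assoc, sub_mul, Matrix.one_mul, smul_mul_assoc, trace_smul,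
    trace_sub, trace_smul, htr, hJ, smul_eq_mul, smul_eq_mul]
  field_simp
  ring

/-- Lower bound on the C-cost and its equality condition. -/
theorem stmt_6 {d N : ℕ} (hd : 0 < d) (hN : d * (d + 1) / 2 ≤ N)
    (q : Fin N → Fin d → ℝ) (hq : ∀ i, ∑ k, q i k ^ 2 = 1)
    (A : Matrix (Fin N) (Idx d) ℝ) (hA : ∀ i, A i = hvec (q i))
    (hrank : A.rank = d * (d + 1) / 2) :
    1 ≤ Ccost A ∧
      (Ccost A = 1 ↔
        Aᵀ * A = ((N : ℝ) / ((d : ℝ) * ((d : ℝ) + 2))) •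
          (Jmat d + (2 : ℝ) • (1 : Matrix (Idx d) (Idx d) ℝ))) := by
  have h2card := two_mul_card_idx d
  have hcard : d * (d + 1) / 2 = Fintype.card (Idx d) := by omega
  have hcard_pos : 0 < Fintype.card (Idx d) := by
    have : 0 < d * (d + 1) := by positivity
    omega
  have hd' : (0 : ℝ) < d := by exact_mod_cast hd
  have hN' : (0 : ℝ) < N := by
    have : 0 < N := by omega
    exact_mod_cast this
  have hc : (0 : ℝ) < Fintype.card (Idx d) := by exact_mod_cast hcard_pos
  have hcR : 2 * (Fintype.card (Idx d) : ℝ) = d * (d + 1) := by exact_mod_cast h2card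
  have hpos : (0 : ℝ) < N / ((d : ℝ) * ((d : ℝ) + 2)) := by positivity
  have htrace : (((N / ((d : ℝ) * ((d : ℝ) + 2))) •
      (Jmat d + (2 : ℝ) • (1 : Matrix (Idx d) (Idx d) ℝ)))⁻¹ * (Aᵀ * A)).trace
        = Fintype.card (Idx d) := by
    have hu := (isUnit_iff_isUnit_det _).1 (posDef_Jmat_add_two d).isUnit
    have hinv := inv_smul' (Jmat d + (2 : ℝ) • (1 : Matrix (Idx d) (Idx d) ℝ))
      (Units.mk0 _ hpos.ne') hu
    rw [Units.smul_def, Units.smul_def, Units.val_inv_eq_inv_val, Units.val_mk0] at hinv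
    rw [hinv, smul_mul_assoc, trace_smul, trace_inv_Jmat_add_two_mul q hq A hA, smul_eq_mul]
    field_simp
    linarith
  have key := (posDef_transpose_mul_self_of_rank_eq_card (hrank.trans hcard)).card_le_trace_inv_mul
    ((posDef_Jmat_add_two d).smul hpos) htrace
  have hC : Ccost A = ((Aᵀ * A)⁻¹ * ((N / ((d : ℝ) * ((d : ℝ) + 2))) •
      (Jmat d + (2 : ℝ) • (1 : Matrix (Idx d) (Idx d) ℝ)))).trace / Fintype.card (Idx d) := by
    rw [Ccost, hcard, mul_smul_comm, trace_smul, smul_eq_mul]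
    field_simp
  rw [hC, one_le_div hc, div_eq_one_iff_eq hc.ne']
  exact key
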